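/- The function f : ℝ → ℝ defined by f(x) = (sinh(8x)·sinh(6x)·sinh(x))/(sinh(9x)·sinh(4x)·sinh(4x)) for x ≠ 0 and f(0) = 1/3 (its continuous extension) is infinitely divisible. -/

import Mathlib

open scoped ComplexOrder

/-- A function `φ : ℝ → ℂ` is positive definite if for every `n`, all real numbers
`x 1, …, x n` and complex numbers `c 1, …, c n`, the sum
`∑ i j, c i * conj (c j) * φ (x i - x j)` is a nonnegative real number. -/
def IsPosDefFun (φ : ℝ → ℂ) : Prop :=
  ∀ (n : ℕ) (x : Fin n → ℝ) (c : Fin n → ℂ),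
    0 ≤ ∑ i, ∑ j, c i * (starRingEnd ℂ) (c j) * φ (x i - x j)

/-- A real-valued function is infinitely divisible if every positive real power of it
is positive definite. -/
def IsInfDivFun (φ : ℝ → ℝ) : Prop :=
  ∀ r : ℝ, 0 < r → IsPosDefFun fun x => ((φ x ^ r : ℝ) : ℂ)

/-!
Euler's product for `sinh` and Frullani's integral give the Lévy-Khintchine representation
`log (sinh (a x) / (a x)) = ∫ t in (0, ∞), (1 - cos (x t)) * 2 / (t (exp (π t / a) - 1))`.
Since `1 - cos (x t)` is negative definite in `x`, a quotient of products of such functions is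
infinitely divisible as soon as its density (denominator minus numerator) is nonnegative. With all
of the scales `8, 6, 1, 9, 4` dividing `72`, this is a polynomial inequality in
`q = exp (-π t / 72)`.
-/

open Filter Topology MeasureTheory Set

section PosSemidef

variable {ι 𝕜 : Type*} [RCLike 𝕜]

theorem posSemidef_of_tendsto {κ : Type*} {l : Filter κ} [l.NeBot] {A : κ → Matrix ι ι 𝕜}
    {B : Matrix ι ι 𝕜} (hA : ∀ k, (A k).PosSemidef)
    (hlim : ∀ i j, Tendsto (fun k => A k i j) l (𝓝 (B i j))) : B.PosSemidef := by
  refine ⟨?_, fun c => ?_⟩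
  · ext i j
    exact tendsto_nhds_unique
      ((hlim j i).star.congr fun k => (hA k).isHermitian.apply i j) (hlim i j)
  · exact ge_of_tendsto' (tendsto_finsetSum _ fun i _ => tendsto_finsetSum _ fun j _ =>
      ((hlim i j).const_mul _).mul_const _) fun k => (hA k).2 c

theorem posSemidef_integral {α : Type*} [MeasurableSpace α] {μ : Measure α}
    {A : α → Matrix ι ι ℝ} (hA : ∀ᵐ t ∂μ, (A t).PosSemidef)
    (hint : ∀ i j, Integrable (fun t => A t i j) μ) :
    (Matrix.of fun i j => ∫ t, A t i j ∂μ).PosSemidef := by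
  refine ⟨?_, fun c => ?_⟩
  · ext i j
    refine integral_congr_ae ?_
    filter_upwards [hA] with t ht using ht.isHermitian.apply i j
  · have hint' (i j : ι) : Integrable (fun t => star (c i) * A t i j * c j) μ :=
      ((hint i j).const_mul _).mul_const _
    have hsum : (c.sum fun i a => c.sum fun j b => star a * (∫ t, A t i j ∂μ) * b) =
        ∫ t, (c.sum fun i a => c.sum fun j b => star a * A t i j * b) ∂μ := by
      simp only [Finsupp.sum, ← integral_const_mul, ← integral_mul_const]
      rw [integral_finsetSum _ fun i _ => integrable_finsetSum _ fun j _ => hint' i j]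
      exact Finset.sum_congr rfl fun i _ => (integral_finsetSum _ fun j _ => hint' i j).symm
    simp only [Matrix.of_apply, hsum]
    refine integral_nonneg_of_ae ?_
    filter_upwards [hA] with t ht using ht.2 c

variable [Finite ι]

theorem posSemidef_map_pow {A : Matrix ι ι 𝕜} (hA : A.PosSemidef) (n : ℕ) :
    (A.map (· ^ n)).PosSemidef := by
  induction n with
  | zero =>
    convert! Matrix.posSemidef_vecMulVec_self_star (1 : ι → 𝕜) using 1
    ext
    simp [Matrix.vecMulVec_apply]
  | succ n ih =>
    convert! ih.hadamard hA using 1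
    ext
    simp [pow_succ]

theorem posSemidef_map_exp {A : Matrix ι ι ℝ} (hA : A.PosSemidef) :
    (A.map Real.exp).PosSemidef := by
  refine posSemidef_of_tendsto (l := atTop)
    (A := fun n => ∑ k ∈ Finset.range n, (k.factorial : ℝ)⁻¹ • A.map (· ^ k)) (fun n => ?_)
    fun i j => ?_
  · exact Matrix.posSemidef_sum _ fun k _ => (posSemidef_map_pow hA k).smul (by positivity)
  · have h := (NormedSpace.expSeries_div_hasSum_exp (A i j)).tendsto_sum_nat
    simpa [Matrix.sum_apply, Real.exp_eq_exp_ℝ, div_eq_inv_mul] using h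

theorem posSemidef_map_ofReal {A : Matrix ι ι ℝ} (hA : A.PosSemidef) :
    (A.map ((↑) : ℝ → 𝕜)).PosSemidef := by
  obtain ⟨m, v, rfl⟩ := Matrix.posSemidef_iff_eq_sum_vecMulVec.mp hA
  convert! Matrix.posSemidef_sum Finset.univ fun k _ =>
    Matrix.posSemidef_vecMulVec_self_star fun i => (v k i : 𝕜) using 1
  ext i j
  simp [Matrix.sum_apply, Matrix.vecMulVec_apply]

end PosSemidef

theorem isPosDefFun_ofReal {φ : ℝ → ℝ}
    (hφ : ∀ (n : ℕ) (x : Fin n → ℝ), (Matrix.of fun i j => φ (x i - x j)).PosSemidef) :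
    IsPosDefFun fun x => (φ x : ℂ) := by
  intro n x c
  have h := (posSemidef_map_ofReal (𝕜 := ℂ) (hφ n x)).dotProduct_mulVec_nonneg (star c)
  convert! h using 1
  simp only [dotProduct, Matrix.mulVec, Finset.mul_sum, Matrix.map_apply, Matrix.of_apply,
    star_star, Pi.star_apply]
  exact Finset.sum_congr rfl fun i _ => Finset.sum_congr rfl fun j _ => by
    simp only [Complex.coe_algebraMap, RCLike.star_def]
    ring

theorem IsPosDefFun.const_mul {φ : ℝ → ℂ} (hφ : IsPosDefFun φ) {a : ℂ} (ha : 0 ≤ a) :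
    IsPosDefFun fun x => a * φ x := by
  intro n x c
  convert! mul_nonneg ha (hφ n x c) using 1
  simp_rw [Finset.mul_sum, mul_left_comm a]

theorem IsInfDivFun.const_mul {φ : ℝ → ℝ} (hφ : IsInfDivFun φ) (hφ₀ : ∀ x, 0 ≤ φ x) {a : ℝ}
    (ha : 0 ≤ a) : IsInfDivFun fun x => a * φ x := by
  intro r hr
  have h := (hφ r hr).const_mul (a := (a ^ r : ℝ)) (by exact_mod_cast Real.rpow_nonneg ha r)
  simpa only [Real.mul_rpow ha (hφ₀ _), Complex.ofReal_mul] using h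

/-- Real-valued negative definite functions in the sense of Schoenberg, defined through the kernel
`ψ x + ψ y - ψ (x - y)` as in Berg and Forst; the usual definition by zero-sum coefficients
is equivalent when `0 ≤ ψ 0`. -/
def IsNegDefFun (ψ : ℝ → ℝ) : Prop :=
  ∀ (n : ℕ) (x : Fin n → ℝ),
    (Matrix.of fun i j => ψ (x i) + ψ (x j) - ψ (x i - x j)).PosSemidef

section NegativeDefinite

variable {ψ : ℝ → ℝ}

theorem IsNegDefFun.const_mul (hψ : IsNegDefFun ψ) {r : ℝ} (hr : 0 ≤ r) :
    IsNegDefFun fun x => r * ψ x := by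
  intro n x
  convert! (hψ n x).smul hr using 1
  ext i j
  simp only [Matrix.of_apply, Matrix.smul_apply, smul_eq_mul]
  ring

theorem IsNegDefFun.isPosDefFun_exp_neg (hψ : IsNegDefFun ψ) :
    IsPosDefFun fun x => (Real.exp (-ψ x) : ℂ) := by
  refine isPosDefFun_ofReal fun n x => ?_
  convert! (posSemidef_map_exp (hψ n x)).hadamard
    (Matrix.posSemidef_vecMulVec_self_star fun i => Real.exp (-ψ (x i))) using 1
  ext i j
  simp only [Matrix.of_apply, Matrix.hadamard_apply, Matrix.map_apply, Matrix.vecMulVec_apply,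
    star_trivial, ← Real.exp_add]
  congr 1
  ring

theorem IsNegDefFun.isInfDivFun_exp_neg (hψ : IsNegDefFun ψ) :
    IsInfDivFun fun x => Real.exp (-ψ x) := by
  intro r hr
  simpa [← Real.exp_mul, mul_comm] using (hψ.const_mul hr.le).isPosDefFun_exp_neg

theorem isNegDefFun_one_sub_cos (t : ℝ) : IsNegDefFun fun x => 1 - Real.cos (x * t) := by
  intro n x
  convert! (Matrix.posSemidef_vecMulVec_self_star fun i => 1 - Real.cos (x i * t)).add
    (Matrix.posSemidef_vecMulVec_self_star fun i => Real.sin (x i * t)) using 1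
  ext i j
  simp only [Matrix.of_apply, Matrix.add_apply, Matrix.vecMulVec_apply, star_trivial,
    sub_mul (x i), Real.cos_sub]
  ring

theorem isNegDefFun_integral {α : Type*} [MeasurableSpace α] {μ : Measure α} {Ψ : α → ℝ → ℝ}
    (hΨ : ∀ᵐ t ∂μ, IsNegDefFun (Ψ t)) (hint : ∀ x, Integrable (fun t => Ψ t x) μ) :
    IsNegDefFun fun x => ∫ t, Ψ t x ∂μ := by
  intro n x
  have h := posSemidef_integral
    (A := fun t => Matrix.of fun i j => Ψ t (x i) + Ψ t (x j) - Ψ t (x i - x j)) (μ := μ)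
    (by filter_upwards [hΨ] with t ht using ht n x)
    fun i j => ((hint _).add (hint _)).sub (hint _)
  convert! h using 1
  ext i j
  simp only [Matrix.of_apply]
  rw [← integral_add (hint _) (hint _),
    ← integral_sub (f := fun t => Ψ t (x i) + Ψ t (x j)) ((hint _).add (hint _)) (hint _)]

end NegativeDefinite

section Frullani

variable {c : ℝ}

theorem abs_one_sub_cos_div_le (x t : ℝ) : |(1 - Real.cos (x * t)) / t| ≤ |x| := by
  rcases eq_or_ne t 0 with rfl | ht
  · simp
  · rw [abs_div, div_le_iff₀ (abs_pos.2 ht), ← abs_mul]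
    simpa using Real.abs_cos_sub_cos_le 0 (x * t)

theorem integrable_one_sub_cos_div_mul {μ : Measure ℝ} {w : ℝ → ℝ} (hw : Integrable w μ)
    (x : ℝ) : Integrable (fun t => (1 - Real.cos (x * t)) / t * w t) μ :=
  hw.bdd_mul (Measurable.aestronglyMeasurable (by fun_prop))
    (ae_of_all _ fun t => abs_one_sub_cos_div_le x t)

theorem integrableOn_one_sub_cos_div_mul_exp_neg (hc : 0 < c) (x : ℝ) :
    IntegrableOn (fun t => (1 - Real.cos (x * t)) / t * Real.exp (-c * t)) (Ioi 0) :=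
  integrable_one_sub_cos_div_mul (integrableOn_exp_mul_Ioi (neg_neg_iff_pos.2 hc) 0) x

theorem integral_sin_mul_exp_neg (hc : 0 < c) (x : ℝ) :
    ∫ t in Ioi (0 : ℝ), Real.sin (x * t) * Real.exp (-c * t) = x / (c ^ 2 + x ^ 2) := by
  obtain ⟨z, hz_re, hz_im⟩ : ∃ z : ℂ, z.re = -c ∧ z.im = x := ⟨⟨-c, x⟩, rfl, rfl⟩
  have hre : z.re < 0 := hz_re ▸ neg_neg_iff_pos.2 hc
  have hfun (t : ℝ) :
      RCLike.im (Complex.exp (z * t)) = Real.sin (x * t) * Real.exp (-c * t) := by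
    simp [Complex.exp_im, hz_re, hz_im, mul_comm]
  have hint := integral_im (integrableOn_exp_mul_complex_Ioi hre 0)
  simp only [hfun, integral_exp_mul_complex_Ioi hre 0] at hint
  rw [hint]
  simp only [Complex.ofReal_zero, mul_zero, Complex.exp_zero, neg_div, one_div,
    RCLike.im_to_complex, Complex.neg_im, Complex.inv_im, Complex.normSq_apply, hz_re, hz_im]
  ring

theorem hasDerivAt_integral_one_sub_cos_div_mul_exp_neg (hc : 0 < c) (x : ℝ) :
    HasDerivAt (fun x => ∫ t in Ioi (0 : ℝ), (1 - Real.cos (x * t)) / t * Real.exp (-c * t))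
      (x / (c ^ 2 + x ^ 2)) x := by
  rw [← integral_sin_mul_exp_neg hc]
  refine (hasDerivAt_integral_of_dominated_loc_of_deriv_le
    (F := fun x t => (1 - Real.cos (x * t)) / t * Real.exp (-c * t))
    (F' := fun x t => Real.sin (x * t) * Real.exp (-c * t))
    (bound := fun t => Real.exp (-c * t)) univ_mem
    (Eventually.of_forall fun y => Measurable.aestronglyMeasurable (by fun_prop))
    (integrableOn_one_sub_cos_div_mul_exp_neg hc x)
    (Measurable.aestronglyMeasurable (by fun_prop)) (ae_of_all _ fun t y _ => ?_)
    (integrableOn_exp_mul_Ioi (neg_neg_iff_pos.2 hc) 0) ?_).2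
  · rw [norm_mul, Real.norm_of_nonneg (Real.exp_pos _).le]
    exact mul_le_of_le_one_left (Real.exp_pos _).le (Real.abs_sin_le_one _)
  · filter_upwards [ae_restrict_mem measurableSet_Ioi] with t ht y _
    have ht₀ : t ≠ 0 := ne_of_gt ht
    convert! ((((hasDerivAt_mul_const t).cos (x := y)).const_sub 1).div_const t).mul_const
      (Real.exp (-c * t)) using 1
    field_simp

theorem integral_one_sub_cos_div_mul_exp_neg (hc : 0 < c) (x : ℝ) :
    ∫ t in Ioi (0 : ℝ), (1 - Real.cos (x * t)) / t * Real.exp (-c * t) =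
      Real.log (1 + (x / c) ^ 2) / 2 := by
  have hlog (x : ℝ) : HasDerivAt (fun x => Real.log (1 + (x / c) ^ 2) / 2)
      (x / (c ^ 2 + x ^ 2)) x := by
    have hpos : 1 + (x / c) ^ 2 ≠ 0 := by positivity
    convert! (((((hasDerivAt_id x).div_const c).pow 2).const_add 1).log hpos).div_const 2
      using 1
    simp only [id_eq, Nat.cast_ofNat, Nat.add_one_sub_one, pow_one, Pi.pow_apply]
    field_simp
  have hdiff (y : ℝ) := (hasDerivAt_integral_one_sub_cos_div_mul_exp_neg hc y).sub (hlog y)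
  have hconst := is_const_of_deriv_eq_zero (fun y => (hdiff y).differentiableAt)
    (fun y => by rw [(hdiff y).deriv, sub_self]) x 0
  simpa [sub_eq_zero] using hconst

end Frullani

/-- The entire function `sinh x / x`, with its value `1` at the removable singularity `0`. -/
noncomputable def sinhc (x : ℝ) : ℝ :=
  if x = 0 then 1 else Real.sinh x / x

section Sinhc

variable {x : ℝ}

theorem sinhc_zero : sinhc 0 = 1 :=
  if_pos rfl

theorem sinhc_of_ne_zero (hx : x ≠ 0) : sinhc x = Real.sinh x / x :=
  if_neg hx

theorem one_lt_sinhc (hx : x ≠ 0) : 1 < sinhc x := by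
  rw [sinhc_of_ne_zero hx]
  rcases hx.lt_or_gt with hx | hx
  · rw [one_lt_div_of_neg hx]
    exact Real.sinh_lt_self_iff.2 hx
  · rw [one_lt_div hx]
    exact Real.self_lt_sinh_iff.2 hx

theorem sinhc_pos (x : ℝ) : 0 < sinhc x := by
  rcases eq_or_ne x 0 with rfl | hx
  · simp [sinhc_zero]
  · exact one_pos.trans (one_lt_sinhc hx)

theorem tendsto_euler_sinhc_prod (x : ℝ) :
    Tendsto (fun n : ℕ => ∏ j ∈ Finset.range n, (1 + (x / (Real.pi * (j + 1))) ^ 2)) atTop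
      (𝓝 (sinhc x)) := by
  rcases eq_or_ne x 0 with rfl | hx
  · simp [sinhc_zero]
  have hpi : (Real.pi : ℂ) ≠ 0 := by exact_mod_cast Real.pi_ne_zero
  have hxC : (x : ℂ) ≠ 0 := by exact_mod_cast hx
  have h := Complex.tendsto_euler_sin_prod ((x : ℂ) / Real.pi * Complex.I)
  have harg : Real.pi * ((x : ℂ) / Real.pi * Complex.I) = x * Complex.I := by field_simp
  have hfactor (j : ℕ) : 1 - ((x : ℂ) / Real.pi * Complex.I) ^ 2 / ((j : ℂ) + 1) ^ 2 =
      ((1 + (x / (Real.pi * (j + 1))) ^ 2 : ℝ) : ℂ) := by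
    push_cast
    rw [mul_pow, Complex.I_sq, ← div_div, div_pow _ ((j : ℂ) + 1)]
    ring
  have hlim := h.div_const (x * Complex.I)
  simp only [harg, hfactor, mul_div_cancel_left₀ _ (mul_ne_zero hxC Complex.I_ne_zero),
    Complex.sin_mul_I, mul_div_mul_right _ _ Complex.I_ne_zero] at hlim
  rw [sinhc_of_ne_zero hx, ← tendsto_ofReal_iff]
  exact_mod_cast hlim

theorem hasSum_log_sinhc (x : ℝ) :
    HasSum (fun j : ℕ => Real.log (1 + (x / (Real.pi * (j + 1))) ^ 2)) (Real.log (sinhc x)) := by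
  rw [hasSum_iff_tendsto_nat_of_nonneg fun j => Real.log_nonneg (by
    simp only [le_add_iff_nonneg_right]
    positivity)]
  refine ((Real.continuousAt_log (sinhc_pos x).ne').tendsto.comp
    (tendsto_euler_sinhc_prod x)).congr fun n => ?_
  exact Real.log_prod fun j _ => by positivity

end Sinhc

section LevyDensity

variable {a : ℝ}

/-- The Lévy density of `log (sinhc (a * x))`: for `0 < a` the latter is the integral over `0 < t`
of `1 - cos (x * t)` against this density. -/
noncomputable def sinhcLevyDensity (a t : ℝ) : ℝ :=
  2 / t * (Real.exp (Real.pi * t / a) - 1)⁻¹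

theorem inv_exp_sub_one (u : ℝ) :
    (Real.exp u - 1)⁻¹ = Real.exp (-u) / (1 - Real.exp (-u)) := by
  rw [Real.exp_neg]
  field_simp

theorem hasSum_exp_neg_succ_mul {u : ℝ} (hu : 0 < u) :
    HasSum (fun j : ℕ => Real.exp (-((j + 1) * u))) (Real.exp u - 1)⁻¹ := by
  have h := (hasSum_geometric_of_lt_one (Real.exp_pos (-u)).le
    (Real.exp_lt_one_iff.2 (neg_neg_iff_pos.2 hu))).mul_left (Real.exp (-u))
  convert! h using 1
  · ext j
    rw [← Real.exp_nat_mul, ← Real.exp_add]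
    congr 1
    ring
  · rw [inv_exp_sub_one, div_eq_mul_inv]

theorem hasSum_one_sub_cos_mul_sinhcLevyDensity (ha : 0 < a) (x : ℝ) {t : ℝ} (ht : 0 < t) :
    HasSum (fun j : ℕ => 2 * ((1 - Real.cos (x * t)) / t *
        Real.exp (-(Real.pi * (j + 1) / a) * t)))
      ((1 - Real.cos (x * t)) * sinhcLevyDensity a t) := by
  have h := (hasSum_exp_neg_succ_mul (u := Real.pi * t / a) (by positivity)).mul_left
    ((1 - Real.cos (x * t)) * (2 / t))
  convert! h using 1
  · ext j
    rw [show -(Real.pi * (j + 1) / a) * t = -((j + 1) * (Real.pi * t / a)) by ring]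
    ring
  · rw [sinhcLevyDensity, mul_assoc]

theorem integral_one_sub_cos_mul_sinhcLevyDensity (ha : 0 < a) (x : ℝ) :
    ∫ t in Ioi 0, (1 - Real.cos (x * t)) * sinhcLevyDensity a t = Real.log (sinhc (a * x)) := by
  set F : ℕ → ℝ → ℝ := fun j t =>
    2 * ((1 - Real.cos (x * t)) / t * Real.exp (-(Real.pi * (j + 1) / a) * t))
  have hc (j : ℕ) : 0 < Real.pi * (j + 1) / a := by positivity
  have hF (j : ℕ) : IntegrableOn (F j) (Ioi 0) :=
    (integrableOn_one_sub_cos_div_mul_exp_neg (hc j) x).const_mul 2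
  have hF_norm (j : ℕ) : ∫ t in Ioi 0, ‖F j t‖ = ∫ t in Ioi 0, F j t := by
    refine setIntegral_congr_fun measurableSet_Ioi fun t ht => Real.norm_of_nonneg ?_
    have := sub_nonneg.2 (Real.cos_le_one (x * t))
    have : 0 < t := ht
    positivity
  have hF_sum : HasSum (fun j => ∫ t in Ioi 0, F j t) (Real.log (sinhc (a * x))) := by
    convert! hasSum_log_sinhc (a * x) using 2 with j
    rw [integral_const_mul, integral_one_sub_cos_div_mul_exp_neg (hc j),
      mul_div_cancel₀ _ two_ne_zero, div_div_eq_mul_div, mul_comm x]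
  have h := hasSum_integral_of_summable_integral_norm hF
    (by simpa only [hF_norm] using hF_sum.summable)
  rw [← h.unique hF_sum]
  exact setIntegral_congr_fun measurableSet_Ioi fun t ht =>
    (hasSum_one_sub_cos_mul_sinhcLevyDensity ha x ht).tsum_eq.symm

theorem integrableOn_one_sub_cos_mul_sinhcLevyDensity (ha : 0 < a) (x : ℝ) :
    IntegrableOn (fun t => (1 - Real.cos (x * t)) * sinhcLevyDensity a t) (Ioi 0) := by
  rcases eq_or_ne x 0 with rfl | hx
  · simp
  -- A nonintegrable function has Bochner integral `0`, but this integral is positive.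
  refine Integrable.of_integral_ne_zero ?_
  rw [integral_one_sub_cos_mul_sinhcLevyDensity ha]
  exact (Real.log_pos (one_lt_sinhc (mul_ne_zero ha.ne' hx))).ne'

end LevyDensity

theorem isInfDivFun_prod_sinhc_div_prod_sinhc {ι κ : Type*} [Fintype ι] [Fintype κ] {b : ι → ℝ}
    {a : κ → ℝ} (hb : ∀ i, 0 < b i) (ha : ∀ k, 0 < a k)
    (h : ∀ t > 0, ∑ i, (Real.exp (t / b i) - 1)⁻¹ ≤ ∑ k, (Real.exp (t / a k) - 1)⁻¹) :
    IsInfDivFun fun x => (∏ i, sinhc (b i * x)) / ∏ k, sinhc (a k * x) := by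
  set w : ℝ → ℝ := fun t => ∑ k, sinhcLevyDensity (a k) t - ∑ i, sinhcLevyDensity (b i) t
  have hw (t : ℝ) (ht : 0 < t) : 0 ≤ w t := by
    simp only [w, sinhcLevyDensity, ← Finset.mul_sum, sub_nonneg]
    exact mul_le_mul_of_nonneg_left (h _ (mul_pos Real.pi_pos ht)) (by positivity)
  have hw_mul (x t : ℝ) : w t * (1 - Real.cos (x * t)) =
      ∑ k, (1 - Real.cos (x * t)) * sinhcLevyDensity (a k) t -
        ∑ i, (1 - Real.cos (x * t)) * sinhcLevyDensity (b i) t := by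
    rw [← Finset.mul_sum, ← Finset.mul_sum, ← mul_sub, mul_comm]
  have hint_a (x : ℝ) (k : κ) := integrableOn_one_sub_cos_mul_sinhcLevyDensity (ha k) x
  have hint_b (x : ℝ) (i : ι) := integrableOn_one_sub_cos_mul_sinhcLevyDensity (hb i) x
  have hneg : IsNegDefFun fun x => ∫ t in Ioi 0, w t * (1 - Real.cos (x * t)) := by
    refine isNegDefFun_integral ?_ fun x => ?_
    · filter_upwards [ae_restrict_mem measurableSet_Ioi] with t ht
      exact (isNegDefFun_one_sub_cos t).const_mul (hw t ht)
    · simp only [hw_mul]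
      exact (integrable_finsetSum _ fun k _ => hint_a x k).sub
        (integrable_finsetSum _ fun i _ => hint_b x i)
  have hlog (x : ℝ) : ∫ t in Ioi 0, w t * (1 - Real.cos (x * t)) =
      ∑ k, Real.log (sinhc (a k * x)) - ∑ i, Real.log (sinhc (b i * x)) := by
    simp only [hw_mul]
    rw [integral_sub (integrable_finsetSum _ fun k _ => hint_a x k)
      (integrable_finsetSum _ fun i _ => hint_b x i), integral_finsetSum _ fun k _ => hint_a x k,
      integral_finsetSum _ fun i _ => hint_b x i]
    simp only [integral_one_sub_cos_mul_sinhcLevyDensity (ha _),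
      integral_one_sub_cos_mul_sinhcLevyDensity (hb _)]
  convert! hneg.isInfDivFun_exp_neg using 2 with x
  rw [hlog, neg_sub, Real.exp_sub, Real.exp_sum, Real.exp_sum]
  simp only [Real.exp_log (sinhc_pos _)]

section Density

variable {q : ℝ}

theorem sum_pow_four_to_seven_le (h₀ : 0 ≤ q) (h₁ : q ≤ 1) :
    q ^ 4 + q ^ 5 + q ^ 6 + q ^ 7 ≤ 1 + ∑ j ∈ Finset.Icc 10 18, q ^ j := by
  -- Each `q ^ k` is a concave function of some higher power of `q`, so it lies below its tangents.
  have h4 : q ^ 4 ≤ 1 / 3 + 4 / 3 * q ^ 12 := by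
    nlinarith [mul_nonneg (sq_nonneg (2 * q ^ 4 - 1)) (by positivity : 0 ≤ q ^ 4 + 1)]
  have h5 : q ^ 5 ≤ 1 / 4 + q ^ 10 := by nlinarith [sq_nonneg (2 * q ^ 5 - 1)]
  have h6 : q ^ 6 ≤ 2 / 9 + 3 * q ^ 18 := by
    nlinarith [mul_nonneg (sq_nonneg (3 * q ^ 6 - 1)) (by positivity : 0 ≤ 3 * q ^ 6 + 2)]
  have h7 : q ^ 7 ≤ 1 / 6 + 3 / 2 * q ^ 14 := by nlinarith [sq_nonneg (3 * q ^ 7 - 1)]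
  have h12 : q ^ 12 ≤ q ^ 11 := pow_le_pow_of_le_one h₀ h₁ (by norm_num)
  have h14 : q ^ 14 ≤ q ^ 13 := pow_le_pow_of_le_one h₀ h₁ (by norm_num)
  have h18 : q ^ 18 ≤ q ^ 17 := pow_le_pow_of_le_one h₀ h₁ (by norm_num)
  have h18' : q ^ 18 ≤ q ^ 16 := pow_le_pow_of_le_one h₀ h₁ (by norm_num)
  have h₀' (k : ℕ) : 0 ≤ q ^ k := pow_nonneg h₀ k
  simp only [Finset.sum_Icc_succ_top, Nat.reduceLeDiff, Nat.reduceAdd, Finset.Icc_self,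
    Finset.sum_singleton]
  linarith [h₀' 12, h₀' 14, h₀' 15]

theorem sum_pow_nine_add_sum_pow_twelve_add_pow_le (h₀ : 0 ≤ q) (h₁ : q ≤ 1) :
    ∑ j ∈ Finset.range 8, q ^ (9 * (j + 1)) + ∑ j ∈ Finset.range 6, q ^ (12 * (j + 1)) + q ^ 72 ≤
      ∑ j ∈ Finset.range 9, q ^ (8 * (j + 1)) + 2 * ∑ j ∈ Finset.range 4, q ^ (18 * (j + 1)) := by
  have hpow (k : ℕ) : 0 ≤ 1 - q ^ k := sub_nonneg.2 (pow_le_one₀ h₀ h₁)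
  have : 0 ≤ 1 - q := sub_nonneg.2 h₁
  have hS := sub_nonneg.2 (sum_pow_four_to_seven_le h₀ h₁)
  have h5 := hpow 5
  have h6 := hpow 6
  have h7 := hpow 7
  have hfactored : 0 ≤ q ^ 8 * ((1 - q) * (1 + ∑ j ∈ Finset.Icc 10 18, q ^ j -
      (q ^ 4 + q ^ 5 + q ^ 6 + q ^ 7)) + q ^ 24 + q ^ 32 * (1 - q ^ 5) + q ^ 46 * (1 - q ^ 6) +
      q ^ 48 * (1 - q ^ 7) + q ^ 56) := by
    positivity
  refine sub_nonneg.1 (hfactored.trans_eq ?_)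
  simp only [Finset.sum_Icc_succ_top, Nat.reduceLeDiff, Nat.reduceAdd, Finset.Icc_self,
    Finset.sum_singleton, Finset.sum_range_succ, Finset.sum_range_zero]
  ring

theorem inv_exp_sub_one_eq_sum_div (u : ℝ) {m : ℕ} (hm : m ≠ 0) :
    (Real.exp u - 1)⁻¹ =
      (∑ j ∈ Finset.range m, Real.exp (-u) ^ (j + 1)) / (1 - Real.exp (-u) ^ m) := by
  simp only [inv_exp_sub_one, pow_succ', ← Finset.mul_sum]
  rw [← mul_neg_geom_sum, mul_div_mul_right _ _ (geom_sum_pos (Real.exp_pos _).le hm).ne']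

theorem sum_inv_exp_sub_one_le {t : ℝ} (ht : 0 < t) :
    (Real.exp (t / 8) - 1)⁻¹ + (Real.exp (t / 6) - 1)⁻¹ + (Real.exp (t / 1) - 1)⁻¹ ≤
      (Real.exp (t / 9) - 1)⁻¹ + (Real.exp (t / 4) - 1)⁻¹ + (Real.exp (t / 4) - 1)⁻¹ := by
  set q := Real.exp (-(t / 72)) with hq
  have hq₁ : q < 1 := Real.exp_lt_one_iff.2 (by linarith)
  have hterm {k m : ℕ} (hkm : k * m = 72) : (Real.exp (t / m) - 1)⁻¹ =
      (∑ j ∈ Finset.range m, q ^ (k * (j + 1))) / (1 - q ^ 72) := by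
    have hm : m ≠ 0 := right_ne_zero_of_mul (hkm.trans_ne (by norm_num))
    have hexp : Real.exp (-(t / m)) = q ^ k := by
      rw [hq, ← Real.exp_nat_mul, (by exact_mod_cast hkm.symm : (72 : ℝ) = k * m)]
      have hk : k ≠ 0 := left_ne_zero_of_mul (hkm.trans_ne (by norm_num))
      congr 1
      field_simp
    rw [inv_exp_sub_one_eq_sum_div _ hm, hexp, ← pow_mul, hkm]
    simp only [pow_mul]
  have h8 := hterm (k := 9) (m := 8) rfl
  have h6 := hterm (k := 12) (m := 6) rfl
  have h1 := hterm (k := 72) (m := 1) rfl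
  have h9 := hterm (k := 8) (m := 9) rfl
  have h4 := hterm (k := 18) (m := 4) rfl
  push_cast at h8 h6 h1 h9 h4
  rw [h8, h6, h1, h9, h4, ← add_div, ← add_div, ← add_div, ← add_div]
  refine div_le_div_of_nonneg_right ?_ (sub_nonneg.2 (pow_le_one₀ (Real.exp_pos _).le hq₁.le))
  simpa [two_mul, add_assoc] using
    sum_pow_nine_add_sum_pow_twelve_add_pow_le (Real.exp_pos _).le hq₁.le

end Density

theorem sinh_861_944_infdiv (f : ℝ → ℝ)
    (hf : ∀ x : ℝ, x ≠ 0 → f x =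
      Real.sinh (8 * x) * Real.sinh (6 * x) * Real.sinh x /
        (Real.sinh (9 * x) * Real.sinh (4 * x) * Real.sinh (4 * x)))
    (hf0 : f 0 = 1 / 3) :
    IsInfDivFun f := by
  have hf_eq (x : ℝ) : f x = 1 / 3 *
      ((∏ i, sinhc (![8, 6, 1] i * x)) / ∏ k, sinhc (![9, 4, 4] k * x)) := by
    simp only [Fin.prod_univ_three, Matrix.cons_val]
    rcases eq_or_ne x 0 with rfl | hx
    · simp [hf0, sinhc_zero]
    · simp only [hf x hx, sinhc_of_ne_zero, mul_eq_zero, OfNat.ofNat_ne_zero, hx, or_self, ne_eq,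
        not_false_eq_true, one_mul]
      field_simp
      norm_num
  have hratio : IsInfDivFun fun x =>
      (∏ i, sinhc (![8, 6, 1] i * x)) / ∏ k, sinhc (![9, 4, 4] k * x) :=
    isInfDivFun_prod_sinhc_div_prod_sinhc (by simp [Fin.forall_fin_succ])
      (by simp [Fin.forall_fin_succ]) fun t ht => by
        simpa [Fin.sum_univ_three] using sum_inv_exp_sub_one_le ht
  rw [funext hf_eq]
  exact hratio.const_mul (fun x => div_nonneg (Finset.prod_nonneg fun i _ => (sinhc_pos _).le)
    (Finset.prod_nonneg fun k _ => (sinhc_pos _).le)) (by norm_num)
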